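/- Let π_θ, θ ∈ ℝ^d, be a family of policies on a finite MDP such that for each (s,a) the map θ ↦ π_θ(a|s) is differentiable at θ₀. Then for every s ∈ S and (s,a) ∈ S×A the maps θ ↦ V^{π_θ}(s) and θ ↦ Q^{π_θ}(s,a) are differentiable at θ₀, θ ↦ η(π_θ) is differentiable at θ₀, and ∇_θ η(π_θ)|_{θ=θ₀} = (1/(1−γ)) · ∑_{s∈S} d^{π_{θ₀}}(s) · [ ∇_θ V^{π_θ}(s)|_{θ=θ₀} − ∑_{a∈A} π_{θ₀}(a|s) · ∇_θ Q^{π_θ}(s,a)|_{θ=θ₀} ]. -/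

import Mathlib

open scoped BigOperators

namespace PolicyOpt

/-- A finite Markov decision process. -/
structure MDP (S A : Type*) [Fintype S] [Fintype A] where
  p : S → A → S → ℝ
  r : S → A → ℝ
  γ : ℝ
  μ0 : S → ℝ
  p_nonneg : ∀ s a s', 0 ≤ p s a s'
  p_sum_one : ∀ s a, ∑ s', p s a s' = 1
  μ0_nonneg : ∀ s, 0 ≤ μ0 s
  μ0_sum_one : ∑ s, μ0 s = 1
  γ_pos : 0 < γ
  γ_lt_one : γ < 1

variable {S A : Type*} [Fintype S] [Fintype A] [DecidableEq S] [DecidableEq A]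

/-- A policy assigns to every state a probability distribution over actions. -/
def IsPolicy (π : S → A → ℝ) : Prop :=
  (∀ s a, 0 ≤ π s a) ∧ ∀ s, ∑ a, π s a = 1

/-- Trajectory prefixes (histories) consisting of `t+1` state-action pairs. -/
abbrev Hist (S A : Type*) (t : ℕ) := Fin (t + 1) → S × A

/-- Probability of a history of length `t+1` when following policy `π`
starting from the initial distribution `μ0`. -/
noncomputable def prob (M : MDP S A) (π : S → A → ℝ) (t : ℕ) (h : Hist S A t) : ℝ :=
  (M.μ0 (h 0).1 * π (h 0).1 (h 0).2) *
    ∏ i : Fin t,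
      (M.p (h i.castSucc).1 (h i.castSucc).2 (h i.succ).1 * π (h i.succ).1 (h i.succ).2)

/-- Probability of a history of length `t+1` when following policy `π`,
conditioned on starting in state `s` with first action `a`. -/
noncomputable def probFrom (M : MDP S A) (π : S → A → ℝ) (s : S) (a : A) (t : ℕ) (h : Hist S A t) : ℝ :=
  (if h 0 = (s, a) then (1 : ℝ) else 0) *
    ∏ i : Fin t,
      (M.p (h i.castSucc).1 (h i.castSucc).2 (h i.succ).1 * π (h i.succ).1 (h i.succ).2)

/-- The last state-action pair of a history. -/
def lastSA {t : ℕ} (h : Hist S A t) : S × A := h (Fin.last t)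

/-- State-action value `Q^π(s,a) = E_{τ∼π}[∑_{t≥0} γ^t r(s_t,a_t) | s₀=s, a₀=a]`. -/
noncomputable def Qval (M : MDP S A) (π : S → A → ℝ) (s : S) (a : A) : ℝ :=
  ∑' t : ℕ, M.γ ^ t * ∑ h : Hist S A t, probFrom M π s a t h * M.r (lastSA h).1 (lastSA h).2

/-- State value `V^π(s)`. -/
noncomputable def Vval (M : MDP S A) (π : S → A → ℝ) (s : S) : ℝ :=
  ∑ a, π s a * Qval M π s a

/-- Advantage `A^π(s,a) = Q^π(s,a) - V^π(s)`. -/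
noncomputable def Adv (M : MDP S A) (π : S → A → ℝ) (s : S) (a : A) : ℝ :=
  Qval M π s a - Vval M π s

/-- The value `η(π) = E_{τ∼π} ∑_{t≥0} γ^t r(s_t,a_t)`. -/
noncomputable def ηval (M : MDP S A) (π : S → A → ℝ) : ℝ :=
  ∑' t : ℕ, M.γ ^ t * ∑ h : Hist S A t, prob M π t h * M.r (lastSA h).1 (lastSA h).2

/-- Normalised discounted state occupancy measure
`d^π(s) = (1-γ) ∑_{t≥0} γ^t Pr_{τ∼π}(s_t = s)`. -/
noncomputable def dOcc (M : MDP S A) (π : S → A → ℝ) (s : S) : ℝ :=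
  (1 - M.γ) * ∑' t : ℕ, M.γ ^ t *
    ∑ h : Hist S A t, prob M π t h * (if (lastSA h).1 = s then (1 : ℝ) else 0)

/-- The surrogate objective `L_π(π') = (1/(1-γ)) ∑_s d^π(s) ∑_a π'(a|s) A^π(s,a)`. -/
noncomputable def Lsur (M : MDP S A) (π π' : S → A → ℝ) : ℝ :=
  (1 - M.γ)⁻¹ * ∑ s, dOcc M π s * ∑ a, π' s a * Adv M π s a

/-- Product of importance sampling ratios `ρ_{0:t}` along a history. -/
noncomputable def ρprod (π π' : S → A → ℝ) {t : ℕ} (h : Hist S A t) : ℝ :=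
  ∏ i, π' (h i).1 (h i).2 / π (h i).1 (h i).2

/-- Smoothed product of importance sampling ratios `ρ^{α}_{0:t}`. -/
noncomputable def ρpow (π π' : S → A → ℝ) {t : ℕ} (α : Fin (t + 1) → ℝ) (h : Hist S A t) : ℝ :=
  ∏ i, (π' (h i).1 (h i).2 / π (h i).1 (h i).2) ^ (α i)

/-- The prefix of length `t+1` of a history of length `T+1` (for `t ≤ T`). -/
def pref {T : ℕ} (h : Hist S A T) (t : Fin (T + 1)) : Hist S A (t : ℕ) :=
  fun i => h (Fin.castLE t.isLt i)


section Helpers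

attribute [local instance] Matrix.linftyOpNormedRing Matrix.linftyOpNormedAlgebra

/-- Transition matrix on state-action pairs. -/
noncomputable def PM (M : MDP S A) (π : S → A → ℝ) : Matrix (S × A) (S × A) ℝ :=
  Matrix.of fun x y => M.p x.1 x.2 y.1 * π y.1 y.2

/-- Resolvent. -/
noncomputable def NM (M : MDP S A) (π : S → A → ℝ) :
    Matrix (S × A) (S × A) ℝ :=
  Ring.inverse (1 - M.γ • PM M π)

theorem hist_sum (M : MDP S A) (π : S → A → ℝ) (g : S × A → ℝ) (t : ℕ) :
    ∀ w : S × A → ℝ,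
    ∑ h : Hist S A t, (w (h 0) *
      ∏ i : Fin t,
        (M.p (h i.castSucc).1 (h i.castSucc).2 (h i.succ).1 * π (h i.succ).1 (h i.succ).2)) *
        g (lastSA h) = w ⬝ᵥ ((PM M π ^ t).mulVec g) := by
  induction t with
  | zero =>
    intro w
    rw [← (Equiv.funUnique (Fin 1) (S × A)).symm.sum_comp]
    simp [lastSA, dotProduct]
  | succ t ih =>
    intro w
    have h1 : w ⬝ᵥ ((PM M π ^ (t+1)).mulVec g)
        = (Matrix.vecMul w (PM M π)) ⬝ᵥ ((PM M π ^ t).mulVec g) := by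
      rw [pow_succ', ← Matrix.mulVec_mulVec, Matrix.dotProduct_mulVec]
    rw [h1, ← ih, ← (Fin.consEquiv (fun _ : Fin (t+2) => S × A)).sum_comp,
      Fintype.sum_prod_type, Finset.sum_comm]
    refine Finset.sum_congr rfl fun h _ => ?_
    simp only [Matrix.vecMul, dotProduct, Finset.sum_mul]
    refine Finset.sum_congr rfl fun x _ => ?_
    have hl : lastSA (t := t+1) ((Fin.consEquiv (fun _ : Fin (t+2) => S × A)) (x, h))
        = lastSA h := by
      simp [lastSA, Fin.consEquiv, ← Fin.succ_last]
    rw [hl, Fin.prod_univ_succ]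
    simp [Fin.consEquiv, PM]
    left
    ring

theorem norm_lt (M : MDP S A) {π : S → A → ℝ} (hπ : IsPolicy π) :
    ‖M.γ • PM M π‖ < 1 := by
  have hP : ‖PM M π‖ ≤ 1 := by
    rw [← coe_nnnorm, Matrix.linfty_opNNNorm_def, ← NNReal.coe_one, NNReal.coe_le_coe]
    refine Finset.sup_le fun x _ => ?_
    rw [← NNReal.coe_le_coe]
    push_cast
    simp only [PM, Matrix.of_apply, Real.norm_eq_abs]
    apply le_of_eq
    rw [Fintype.sum_prod_type]
    rw [← M.p_sum_one x.1 x.2]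
    refine Finset.sum_congr rfl fun s _ => ?_
    calc _ = ∑ a, M.p x.1 x.2 s * π s a := Finset.sum_congr rfl fun a _ =>
            abs_of_nonneg (mul_nonneg (M.p_nonneg _ _ _) (hπ.1 _ _))
      _ = _ := by rw [← Finset.mul_sum, hπ.2, mul_one]
  calc ‖M.γ • PM M π‖ ≤ ‖M.γ‖ * ‖PM M π‖ := norm_smul_le _ _
    _ ≤ ‖M.γ‖ * 1 := by gcongr
    _ < 1 := by rw [mul_one, Real.norm_eq_abs, abs_of_pos M.γ_pos]; exact M.γ_lt_one

theorem isUnit_res (M : MDP S A) {π : S → A → ℝ} (hπ : IsPolicy π) :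
    IsUnit (1 - M.γ • PM M π) :=
  isUnit_one_sub_of_norm_lt_one (norm_lt M hπ)

theorem hasSum_NM (M : MDP S A) {π : S → A → ℝ} (hπ : IsPolicy π) (w g : S × A → ℝ) :
    HasSum (fun t : ℕ => M.γ ^ t * (w ⬝ᵥ ((PM M π ^ t).mulVec g))) (w ⬝ᵥ ((NM M π).mulVec g)) := by
  have h := (summable_geometric_of_norm_lt_one (x := M.γ • PM M π) (norm_lt M hπ)).hasSum
  have h2 : ∑' i : ℕ, (M.γ • PM M π) ^ i = NM M π := by
    rw [NM, NormedRing.inverse_one_sub _ (norm_lt M hπ)]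
    rfl
  have h5 : HasSum (fun n : ℕ => (M.γ • PM M π) ^ n) (NM M π) := by
    rw [← h2]
    exact h
  let L : Matrix (S × A) (S × A) ℝ →ₗ[ℝ] ℝ :=
    { toFun := fun B => w ⬝ᵥ (B.mulVec g)
      map_add' := fun B C => by simp [Matrix.add_mulVec, dotProduct_add]
      map_smul' := fun c B => by simp [Matrix.smul_mulVec, dotProduct_smul] }
  have hc : Continuous L := L.continuous_of_finiteDimensional
  have h3 := h5.map L hc
  convert h3 using 1
  · funext t
    simp [L, smul_pow, Matrix.smul_mulVec, dotProduct_smul]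
  · rfl

/-- Reward vector. -/
def rv (M : MDP S A) : S × A → ℝ := fun x => M.r x.1 x.2

theorem Qval_eq (M : MDP S A) {π : S → A → ℝ} (hπ : IsPolicy π) (s : S) (a : A) :
    Qval M π s a = (NM M π).mulVec (rv M) (s, a) := by
  have h := (hasSum_NM M hπ (Pi.single (s, a) 1) (rv M)).tsum_eq
  rw [single_one_dotProduct] at h
  rw [← h, Qval]
  refine tsum_congr fun t => ?_
  rw [← hist_sum]
  congr 1
  refine Finset.sum_congr rfl fun h _ => ?_
  simp only [probFrom, Pi.single_apply, rv]

/-- Initial state-action distribution. -/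
def nu (M : MDP S A) (π : S → A → ℝ) : S × A → ℝ := fun x => M.μ0 x.1 * π x.1 x.2

theorem ηval_eq (M : MDP S A) {π : S → A → ℝ} (hπ : IsPolicy π) :
    ηval M π = ∑ s, M.μ0 s * Vval M π s := by
  have h := (hasSum_NM M hπ (nu M π) (rv M)).tsum_eq
  have h2 : ηval M π = nu M π ⬝ᵥ ((NM M π).mulVec (rv M)) := by
    rw [← h, ηval]
    refine tsum_congr fun t => ?_
    rw [← hist_sum]
    rfl
  rw [h2, dotProduct, Fintype.sum_prod_type]
  refine Finset.sum_congr rfl fun s _ => ?_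
  rw [Vval, Finset.mul_sum]
  refine Finset.sum_congr rfl fun a _ => ?_
  rw [Qval_eq M hπ, nu]
  ring

/-- State-action discounted occupancy. -/
noncomputable def occ (M : MDP S A) (π : S → A → ℝ) : S × A → ℝ :=
  Matrix.vecMul (nu M π) (NM M π)

theorem dOcc_eq (M : MDP S A) {π : S → A → ℝ} (hπ : IsPolicy π) (s : S) :
    dOcc M π s = (1 - M.γ) * ∑ a, occ M π (s, a) := by
  have h := (hasSum_NM M hπ (nu M π) (fun x => if x.1 = s then 1 else 0)).tsum_eq
  rw [dOcc]
  congr 1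
  trans nu M π ⬝ᵥ ((NM M π).mulVec (fun x => if x.1 = s then 1 else 0))
  · rw [← h]
    refine tsum_congr fun t => ?_
    rw [← hist_sum]
    rfl
  · rw [Matrix.dotProduct_mulVec, dotProduct, Fintype.sum_prod_type, Finset.sum_eq_single s]
    · simp [occ]
    · intro b _ hb
      simp [hb]
    · simp

theorem occ_eq (M : MDP S A) {π : S → A → ℝ} (hπ : IsPolicy π) (s : S) (a : A) :
    occ M π (s, a) = (M.μ0 s + M.γ * ∑ x, occ M π x * M.p x.1 x.2 s) * π s a := by
  have h : NM M π * (1 - M.γ • PM M π) = 1 := Ring.inverse_mul_cancel _ (isUnit_res M hπ)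
  have h2 : NM M π = 1 + M.γ • (NM M π * PM M π) := by
    rw [mul_sub, mul_one, mul_smul_comm] at h
    exact sub_eq_iff_eq_add.mp h
  have h3 : occ M π = nu M π + M.γ • Matrix.vecMul (occ M π) (PM M π) := by
    conv_lhs => rw [occ, h2]
    rw [Matrix.vecMul_add, Matrix.vecMul_one, Matrix.vecMul_smul, ← Matrix.vecMul_vecMul, ← occ]
  have h4 := congrFun h3 (s, a)
  rw [h4]
  simp only [Pi.add_apply, Pi.smul_apply, nu, Matrix.vecMul, dotProduct, PM, Matrix.of_apply,
    smul_eq_mul, add_mul, mul_assoc, Finset.sum_mul]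

theorem Bellman (M : MDP S A) {π : S → A → ℝ} (hπ : IsPolicy π) (s : S) (a : A) :
    Qval M π s a = M.r s a + ∑ s', (M.γ * M.p s a s') * Vval M π s' := by
  have h : (1 - M.γ • PM M π) * NM M π = 1 := Ring.mul_inverse_cancel _ (isUnit_res M hπ)
  have h2 : NM M π = 1 + M.γ • (PM M π * NM M π) := by
    rw [sub_mul, one_mul, smul_mul_assoc] at h
    exact sub_eq_iff_eq_add.mp h
  rw [Qval_eq M hπ, h2, Matrix.add_mulVec, Matrix.one_mulVec, Matrix.smul_mulVec,
    ← Matrix.mulVec_mulVec]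
  simp only [Pi.add_apply, Pi.smul_apply, rv, smul_eq_mul]
  congr 1
  rw [Matrix.mulVec, dotProduct, Fintype.sum_prod_type, Finset.mul_sum]
  refine Finset.sum_congr rfl fun s' _ => ?_
  rw [Vval, mul_assoc]
  congr 1
  rw [Finset.mul_sum]
  refine Finset.sum_congr rfl fun a' _ => ?_
  rw [Qval_eq M hπ]
  simp only [PM, Matrix.of_apply, mul_assoc]

theorem diff_Q {E : Type*} [NormedAddCommGroup E] [NormedSpace ℝ E] (M : MDP S A)
    (πθ : E → S → A → ℝ) (hpol : ∀ θ, IsPolicy (πθ θ)) (θ₀ : E)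
    (hdiff : ∀ s a, DifferentiableAt ℝ (fun θ => πθ θ s a) θ₀) (s : S) (a : A) :
    DifferentiableAt ℝ (fun θ => Qval M (πθ θ) s a) θ₀ := by
  have h1 : DifferentiableAt ℝ (fun θ => 1 - M.γ • PM M (πθ θ)) θ₀ := by
    have hP : DifferentiableAt ℝ (fun θ => PM M (πθ θ)) θ₀ := by
      have e : (fun θ => PM M (πθ θ)) = fun θ => ∑ x : S × A, ∑ y : S × A,
          (πθ θ y.1 y.2) • Matrix.single x y (M.p x.1 x.2 y.1) := by
        funext θ
        rw [Matrix.matrix_eq_sum_single (PM M (πθ θ))]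
        simp [PM, Matrix.smul_single, mul_comm]
      rw [e]
      refine DifferentiableAt.fun_sum fun x _ => DifferentiableAt.fun_sum fun y _ => ?_
      exact (hdiff y.1 y.2).smul_const _
    exact (hP.const_smul M.γ).const_sub 1
  obtain ⟨u, hu⟩ := isUnit_res M (hpol θ₀)
  have h2 : DifferentiableAt ℝ (fun θ => NM M (πθ θ)) θ₀ := by
    have h3 := (hasFDerivAt_ringInverse (𝕜 := ℝ) u).differentiableAt
    rw [hu] at h3
    exact h3.comp θ₀ h1
  let L : Matrix (S × A) (S × A) ℝ →ₗ[ℝ] ℝ :=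
    { toFun := fun B => B.mulVec (rv M) (s, a)
      map_add' := fun B C => by simp [Matrix.add_mulVec]
      map_smul' := fun c B => by simp [Matrix.smul_mulVec] }
  have h4 := (LinearMap.toContinuousLinearMap L).differentiableAt.comp θ₀ h2
  have e : (fun θ => Qval M (πθ θ) s a) =
      (LinearMap.toContinuousLinearMap L) ∘ fun θ => NM M (πθ θ) := by
    funext θ
    rw [Qval_eq M (hpol θ)]
    rfl
  rw [e]
  exact h4

theorem grad_affine {E ι : Type*} [NormedAddCommGroup E] [InnerProductSpace ℝ E] [CompleteSpace E]
    [Fintype ι] (c : ℝ) (w : ι → ℝ) (f : ι → E → ℝ) (g : ι → E) (θ₀ : E)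
    (h : ∀ i, HasGradientAt (f i) (g i) θ₀) :
    HasGradientAt (fun θ => c + ∑ i, w i * f i θ) (∑ i, w i • g i) θ₀ := by
  rw [hasGradientAt_iff_hasFDerivAt]
  have h1 : HasFDerivAt (fun θ => c + ∑ i, w i * f i θ)
      (∑ i, w i • (InnerProductSpace.toDual ℝ E) (g i)) θ₀ :=
    (HasFDerivAt.fun_sum fun i _ => ((h i).hasFDerivAt.const_mul (w i))).const_add c
  have e : (InnerProductSpace.toDual ℝ E) (∑ i, w i • g i)
      = ∑ i, w i • (InnerProductSpace.toDual ℝ E) (g i) := by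
    simp [map_sum]
  rw [e]
  exact h1

theorem final_id {E : Type*} [AddCommGroup E] [Module ℝ E] (M : MDP S A) {π : S → A → ℝ}
    (hπ : IsPolicy π) (gV : S → E) :
    (1 - M.γ)⁻¹ • ∑ s, dOcc M π s •
      (gV s - ∑ a, π s a • ∑ s', (M.γ * M.p s a s') • gV s') = ∑ s, M.μ0 s • gV s := by
  have hγ : (1 - M.γ) ≠ 0 := by linarith [M.γ_lt_one]
  set B : S → ℝ := fun s => M.μ0 s + M.γ * ∑ x, occ M π x * M.p x.1 x.2 s with hB
  have hD : ∀ s, (1 - M.γ)⁻¹ * dOcc M π s = B s := by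
    intro s
    rw [dOcc_eq M hπ, inv_mul_cancel_left₀ hγ]
    rw [Finset.sum_congr rfl fun a _ => occ_eq M hπ s a]
    rw [← Finset.mul_sum, hπ.2, mul_one]
  have hO : ∀ s a, occ M π (s, a) = B s * π s a := fun s a => occ_eq M hπ s a
  rw [Finset.smul_sum]
  rw [Finset.sum_congr rfl fun s _ => by rw [smul_smul, hD s]]
  simp only [smul_smul, smul_sub, Finset.sum_sub_distrib, Finset.smul_sum]
  rw [sub_eq_iff_eq_add]
  have hr : ∑ s, ∑ a, ∑ s', (B s * (π s a * (M.γ * M.p s a s'))) • gV s'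
      = ∑ s', (M.γ * ∑ x, occ M π x * M.p x.1 x.2 s') • gV s' := by
    simp_rw [Finset.mul_sum, Finset.sum_smul]
    rw [Finset.sum_comm (s := (Finset.univ : Finset S)) (t := (Finset.univ : Finset (S × A))),
      Fintype.sum_prod_type]
    refine Finset.sum_congr rfl fun s _ => Finset.sum_congr rfl fun a _ =>
      Finset.sum_congr rfl fun s' _ => ?_
    rw [hO]
    congr 1
    ring
  rw [hr, ← Finset.sum_add_distrib]
  refine Finset.sum_congr rfl fun s _ => ?_
  rw [← add_smul]

end Helpers

/-- The general policy gradient theorem (Ciosek–Whiteson): `V^{π_θ}` and `Q^{π_θ}`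
are differentiable at `θ₀`, `η(π_θ)` is differentiable at `θ₀`, and
`∇η = (1/(1−γ)) ∑_s d^{π_{θ₀}}(s) (∇V(s) − ∑_a π_{θ₀}(a|s) ∇Q(s,a))`. -/
theorem general_policy_gradient_theorem
    (d : ℕ) (M : MDP S A)
    (πθ : EuclideanSpace ℝ (Fin d) → S → A → ℝ)
    (hpol : ∀ θ, IsPolicy (πθ θ))
    (θ₀ : EuclideanSpace ℝ (Fin d))
    (gπ : S → A → EuclideanSpace ℝ (Fin d))
    (hdiff : ∀ s a, HasGradientAt (fun θ => πθ θ s a) (gπ s a) θ₀) :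
    ∃ (gV : S → EuclideanSpace ℝ (Fin d)) (gQ : S → A → EuclideanSpace ℝ (Fin d)),
      (∀ s, HasGradientAt (fun θ => Vval M (πθ θ) s) (gV s) θ₀) ∧
      (∀ s a, HasGradientAt (fun θ => Qval M (πθ θ) s a) (gQ s a) θ₀) ∧
      HasGradientAt (fun θ => ηval M (πθ θ))
        ((1 - M.γ)⁻¹ •
          ∑ s, dOcc M (πθ θ₀) s • (gV s - ∑ a, πθ θ₀ s a • gQ s a)) θ₀ := by
  have hd : ∀ s a, DifferentiableAt ℝ (fun θ => πθ θ s a) θ₀ :=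
    fun s a => (hdiff s a).differentiableAt
  have hQ := diff_Q M πθ hpol θ₀ hd
  have hV : ∀ s, DifferentiableAt ℝ (fun θ => Vval M (πθ θ) s) θ₀ := fun s =>
    DifferentiableAt.fun_sum fun a _ => (hd s a).mul (hQ s a)
  have hgV := fun s => (hV s).hasGradientAt
  refine ⟨fun s => gradient (fun θ => Vval M (πθ θ) s) θ₀,
    fun s a => ∑ s', (M.γ * M.p s a s') • gradient (fun θ => Vval M (πθ θ) s') θ₀, hgV, ?_, ?_⟩
  · intro s a
    have h := grad_affine (M.r s a) (fun s' => M.γ * M.p s a s')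
      (fun s' θ => Vval M (πθ θ) s') _ θ₀ hgV
    convert h using 1
    funext θ
    exact Bellman M (hpol θ) s a
  · rw [final_id M (hpol θ₀)]
    have h := grad_affine 0 M.μ0 (fun s' θ => Vval M (πθ θ) s') _ θ₀ hgV
    convert h using 1
    funext θ
    rw [ηval_eq M (hpol θ), zero_add]

end PolicyOpt
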